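/- arXiv:2205.08388 — 4 statements merged into one kernel-verified Lean document; each statement's English description precedes it below -/
import Mathlib

section
/- Let X be a Hausdorff topological space equipped with its Borel σ-algebra, let T > 0, let 𝒳 = C([0,T];X) be the space of continuous maps from [0,T] into X with the compact-open topology and its Borel σ-algebra, and let Π₀ : 𝒳 → X denote evaluation at time 0. Let 𝒰 ⊆ 𝒳 satisfy: (H1) Π₀(𝒰) = X; (H2) there exists a family 𝒦′ of compact subsets of X such that every inner regular Borel probability measure μ₀ on X satisfies μ₀(A) = sup{ μ₀(K) : K ∈ 𝒦′, K ⊆ A } for every Borel set A ⊆ X; (H3) for every K ∈ 𝒦′ the set Π₀⁻¹(K) ∩ 𝒰 is compact in 𝒳. Then for every inner regular Borel probability measure μ₀ on X there exists a 𝒰-trajectory statistical solution ρ on 𝒳 whose pushforward under Π₀ equals μ₀. -/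
open MeasureTheory Set

/-- A Borel (probability) measure is inner regular: the measure of every
measurable set is the supremum of the measures of its compact subsets. -/
def InnerRegularMeasure {Z : Type*} [TopologicalSpace Z] [MeasurableSpace Z]
    (μ : Measure Z) : Prop :=
  ∀ A : Set Z, MeasurableSet A → μ A = ⨆ (K : Set Z) (_ : IsCompact K) (_ : K ⊆ A), μ K

/-- A `𝒰`-trajectory statistical solution: an inner regular Borel probability
measure carried by a Borel subset of `𝒰`. -/
def IsTrajectoryStatSol {𝒳 : Type*} [TopologicalSpace 𝒳] [MeasurableSpace 𝒳]
    (𝒰 : Set 𝒳) (ρ : Measure 𝒳) : Prop :=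
  IsProbabilityMeasure ρ ∧ InnerRegularMeasure ρ ∧
    ∃ 𝒱 : Set 𝒳, 𝒱 ⊆ 𝒰 ∧ MeasurableSet 𝒱 ∧ ρ 𝒱 = 1

open scoped BoundedContinuousFunction CompactlySupported in
lemma lift_compact {K C : Type*} [TopologicalSpace K] [T2Space K] [CompactSpace K]
    [MeasurableSpace K] [BorelSpace K] [TopologicalSpace C] [T2Space C] [CompactSpace C]
    [MeasurableSpace C] [BorelSpace C] (f : C(C, K)) (hf : Function.Surjective f)
    (μ : Measure K) [IsFiniteMeasure μ] [μ.InnerRegular] :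
    ∃ ν : Measure C, ν.InnerRegular ∧ IsFiniteMeasure ν ∧ Measure.map f ν = μ := by
  have hint : ∀ g : C(K, ℝ), Integrable g μ := fun g =>
    (BoundedContinuousFunction.mkOfCompact g).integrable μ
  let I : C(K, ℝ) →ₗ[ℝ] ℝ :=
    { toFun := fun g => ∫ x, g x ∂μ
      map_add' := fun g h => integral_add (hint g) (hint h)
      map_smul' := fun c g => integral_const_mul c _ }
  let L : C(K, ℝ) →ₗ[ℝ] C(C, ℝ) :=
    { toFun := fun g => g.comp f
      map_add' := fun g h => rfl
      map_smul' := fun c g => rfl }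
  have hL : Function.Injective L := by
    intro g h hgh
    ext x
    obtain ⟨y, rfl⟩ := hf x
    exact congrArg (fun k : C(C, ℝ) => k y) hgh
  let e := LinearEquiv.ofInjective L hL
  let p : C(C, ℝ) →ₗ.[ℝ] ℝ := ⟨LinearMap.range L, I.comp e.symm.toLinearMap⟩
  let s : PointedCone ℝ C(C, ℝ) := PointedCone.positive ℝ C(C, ℝ)
  have hpL : ∀ g : C(K, ℝ), p ⟨L g, g, rfl⟩ = I g := by
    intro g
    change I (e.symm (e g)) = I g
    simp
  obtain ⟨Λ, hΛ, hpos⟩ := riesz_extension s p (by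
      rintro ⟨_, g, rfl⟩ hx
      rw [hpL]
      refine integral_nonneg fun x => ?_
      obtain ⟨y, rfl⟩ := hf x
      have hx' : (0 : C(C, ℝ)) ≤ L g := by simpa [s] using hx
      exact hx' y) (by
      intro y
      refine ⟨⟨L (ContinuousMap.const K ‖y‖), _, rfl⟩, ?_⟩
      have : (0 : C(C, ℝ)) ≤ L (ContinuousMap.const K ‖y‖) + y := by
        intro x
        have h1 := y.norm_coe_le_norm x
        have h2 := neg_abs_le (y x)
        rw [Real.norm_eq_abs] at h1
        change 0 ≤ ‖y‖ + y x
        linarith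
      simpa [s] using this)
  let J : C_c(C, ℝ) →ₗ[ℝ] C(C, ℝ) :=
    { toFun := fun g => g.toContinuousMap
      map_add' := fun g h => rfl
      map_smul' := fun c g => rfl }
  let Λ' : C_c(C, ℝ) →ₚ[ℝ] ℝ := PositiveLinearMap.mk₀ (Λ.comp J) (by
    intro g hg
    apply hpos
    have : (0 : C(C, ℝ)) ≤ J g := fun x => hg x
    simpa [s] using this)
  let ν := RealRMK.rieszMeasure Λ'
  have hν : ν.Regular := inferInstance
  have hνI : ν.InnerRegular := inferInstance
  refine ⟨ν, hνI, inferInstance, ?_⟩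
  have : (Measure.map f ν).InnerRegular := Measure.InnerRegular.map_of_continuous f.continuous
  have : (Measure.map f ν).Regular := inferInstance
  have : μ.Regular := inferInstance
  apply Measure.ext_of_integral_eq_on_compactlySupported
  intro g
  rw [integral_map f.continuous.aemeasurable
    (show AEStronglyMeasurable (fun x => g x) _ from
      (map_continuous g).aestronglyMeasurable)]
  let g' : C_c(C, ℝ) := ⟨g.toContinuousMap.comp f, HasCompactSupport.of_compactSpace _⟩
  have h1 : ∫ x, g' x ∂ν = Λ' g' := RealRMK.integral_rieszMeasure Λ' g'
  have h2 : Λ' g' = Λ (L g.toContinuousMap) := rfl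
  have h3 := hΛ ⟨L g.toContinuousMap, _, rfl⟩
  rw [hpL] at h3
  exact h1.trans (h2.trans h3)

lemma lift_set {X Y : Type*} [TopologicalSpace X] [T2Space X] [MeasurableSpace X] [BorelSpace X]
    [TopologicalSpace Y] [T2Space Y] [MeasurableSpace Y] [BorelSpace Y] (f : Y → X)
    (hf : Continuous f) (K : Set X) (C : Set Y) (hK : IsCompact K) (hC : IsCompact C)
    (hmaps : MapsTo f C K) (hsurj : SurjOn f C K) (m : Measure X) [IsFiniteMeasure m]
    [m.InnerRegular] (hm : m Kᶜ = 0) :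
    ∃ ν : Measure Y, ν.InnerRegular ∧ Measure.map f ν = m ∧ ν Cᶜ = 0 := by
  have : CompactSpace K := isCompact_iff_compactSpace.mp hK
  have : CompactSpace C := isCompact_iff_compactSpace.mp hC
  have hKm := hK.measurableSet
  have hCm := hC.measurableSet
  let m' : Measure K := m.comap Subtype.val
  have hm'f : IsFiniteMeasure m' := inferInstance
  have hm'r : m'.InnerRegular := by
    constructor
    refine (Measure.InnerRegular.innerRegular (μ := m)).comap (MeasurableEmbedding.subtype_coe hKm)
      (fun U hU => (MeasurableEmbedding.subtype_coe hKm).measurableSet_image' hU)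
      (fun k hk hk' => ?_)
    exact Topology.IsInducing.subtypeVal.isCompact_preimage' hk' hk
  let F : C(C, K) := ⟨hmaps.restrict f C K, hf.restrict hmaps⟩
  have hF : Function.Surjective F := (MapsTo.restrict_surjective_iff hmaps).mpr hsurj
  obtain ⟨ν, hν, _, hmap⟩ := lift_compact F hF m'
  refine ⟨Measure.map Subtype.val ν,
    Measure.InnerRegular.map_of_continuous continuous_subtype_val, ?_, ?_⟩
  · rw [Measure.map_map hf.measurable measurable_subtype_coe]
    have : f ∘ (Subtype.val : C → Y) = Subtype.val ∘ F := rfl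
    rw [this, ← Measure.map_map measurable_subtype_coe F.continuous.measurable, hmap,
      (MeasurableEmbedding.subtype_coe hKm).map_comap, Subtype.range_coe]
    exact Measure.restrict_eq_self_of_ae_mem hm
  · rw [Measure.map_apply measurable_subtype_coe hCm.compl]
    simp

theorem existence_of_trajectory_statistical_solutions
    {X : Type*} [TopologicalSpace X] [T2Space X] [MeasurableSpace X] [BorelSpace X]
    (T : ℝ) (hT : 0 < T)
    [MeasurableSpace C(Icc (0 : ℝ) T, X)] [BorelSpace C(Icc (0 : ℝ) T, X)]
    (𝒰 : Set C(Icc (0 : ℝ) T, X))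
    (Pi0 : C(Icc (0 : ℝ) T, X) → X)
    (hPi0 : ∀ u : C(Icc (0 : ℝ) T, X), Pi0 u = u ⟨0, Set.left_mem_Icc.mpr hT.le⟩)
    -- (H1)
    (H1 : Pi0 '' 𝒰 = Set.univ)
    (𝒦' : Set (Set X))
    (h𝒦'_compact : ∀ K ∈ 𝒦', IsCompact K)
    -- (H2)
    (H2 : ∀ μ₀ : Measure X, IsProbabilityMeasure μ₀ → InnerRegularMeasure μ₀ →
      ∀ A : Set X, MeasurableSet A →
        μ₀ A = ⨆ (K : Set X) (_ : K ∈ 𝒦') (_ : K ⊆ A), μ₀ K)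
    -- (H3)
    (H3 : ∀ K ∈ 𝒦', IsCompact (Pi0 ⁻¹' K ∩ 𝒰)) :
    ∀ μ₀ : Measure X, IsProbabilityMeasure μ₀ → InnerRegularMeasure μ₀ →
      ∃ ρ : Measure C(Icc (0 : ℝ) T, X),
        IsTrajectoryStatSol 𝒰 ρ ∧ μ₀ = Measure.map Pi0 ρ := by
  intro μ hμP hμI
  have hcont : Continuous Pi0 := by
    have : Pi0 = fun u => u ⟨0, Set.left_mem_Icc.mpr hT.le⟩ := funext hPi0
    rw [this]
    fun_prop
  have hir : μ.InnerRegular := by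
    constructor
    intro A hA r hr
    rw [hμI A hA] at hr
    simp only [lt_iSup_iff] at hr
    obtain ⟨K, hK, hKA, h⟩ := hr
    exact ⟨K, hKA, hK, h⟩
  have hex : ∀ n : ℕ, ∃ K ∈ 𝒦', 1 - ((n : ENNReal) + 1)⁻¹ < μ K := by
    intro n
    have h1 := H2 μ hμP hμI univ MeasurableSet.univ
    rw [measure_univ] at h1
    have h2 : 1 - ((n : ENNReal) + 1)⁻¹ < 1 := by
      apply ENNReal.sub_lt_self ENNReal.one_ne_top one_ne_zero
      simp
    have h3 := h2.trans_eq h1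
    simp only [lt_iSup_iff] at h3
    obtain ⟨K, hK, -, h⟩ := h3
    exact ⟨K, hK, h⟩
  choose K hK𝒦 hKμ using hex
  have hKc : ∀ n, IsCompact (K n) := fun n => h𝒦'_compact _ (hK𝒦 n)
  have hKm : ∀ n, MeasurableSet (K n) := fun n => (hKc n).measurableSet
  have hUm : MeasurableSet (⋃ n, K n) := MeasurableSet.iUnion hKm
  have hU : μ (⋃ n, K n) = 1 := by
    apply le_antisymm prob_le_one
    have ht : Filter.Tendsto (fun n : ℕ => 1 - ((n : ENNReal) + 1)⁻¹) Filter.atTop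
        (nhds (1 - 0)) := by
      apply ENNReal.Tendsto.sub tendsto_const_nhds _ (Or.inl ENNReal.one_ne_top)
      have := (Filter.tendsto_add_atTop_iff_nat 1).mpr ENNReal.tendsto_inv_nat_nhds_zero
      simpa using this
    rw [tsub_zero] at ht
    exact le_of_tendsto' ht fun n => (hKμ n).le.trans (measure_mono (subset_iUnion K n))
  let D := disjointed K
  have hDm : ∀ n, MeasurableSet (D n) := fun n => MeasurableSet.disjointed hKm n
  have hlift : ∀ n, ∃ ν : Measure C(Icc (0 : ℝ) T, X), ν.InnerRegular ∧
      Measure.map Pi0 ν = μ.restrict (D n) ∧ ν (Pi0 ⁻¹' (K n) ∩ 𝒰)ᶜ = 0 := by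
    intro n
    refine lift_set Pi0 hcont (K n) _ (hKc n) (H3 _ (hK𝒦 n)) (fun u hu => hu.1) ?_ _ ?_
    · intro x hx
      obtain ⟨u, hu, rfl⟩ : x ∈ Pi0 '' 𝒰 := H1 ▸ mem_univ x
      exact ⟨u, ⟨hx, hu⟩, rfl⟩
    · rw [Measure.restrict_apply (hKm n).compl]
      have : (K n)ᶜ ∩ D n = ∅ := by
        ext x
        simp only [mem_inter_iff, mem_compl_iff, mem_empty_iff_false, iff_false, not_and]
        exact fun h1 h2 => h1 (disjointed_subset K n h2)
      simp [this]
  choose ν hνI hνmap hνC using hlift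
  have hmap : μ = Measure.map Pi0 (Measure.sum ν) := by
    rw [Measure.map_sum hcont.aemeasurable]
    simp only [hνmap]
    rw [← Measure.restrict_iUnion (disjoint_disjointed K) hDm, iUnion_disjointed]
    symm
    apply Measure.restrict_eq_self_of_ae_mem
    exact (prob_compl_eq_zero_iff hUm).mpr hU
  have hP : IsProbabilityMeasure (Measure.sum ν) := by
    constructor
    have : Measure.map Pi0 (Measure.sum ν) univ = 1 := by rw [← hmap]; exact measure_univ
    rwa [Measure.map_apply hcont.measurable MeasurableSet.univ, preimage_univ] at this
  refine ⟨Measure.sum ν, ⟨hP, ?_, ⋃ n, Pi0 ⁻¹' (K n) ∩ 𝒰, ?_, ?_, ?_⟩, hmap⟩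
  · intro A hA
    rw [hA.measure_eq_iSup_isCompact]
    refine iSup_congr fun k => ?_
    rw [iSup_comm]
  · exact iUnion_subset fun n => inter_subset_right
  · exact MeasurableSet.iUnion fun n => (H3 _ (hK𝒦 n)).measurableSet
  · have hVm : MeasurableSet (⋃ n, Pi0 ⁻¹' (K n) ∩ 𝒰) :=
      MeasurableSet.iUnion fun n => (H3 _ (hK𝒦 n)).measurableSet
    rw [← prob_compl_eq_zero_iff hVm, Measure.sum_apply _ hVm.compl, ENNReal.tsum_eq_zero]
    intro n
    exact measure_mono_null (compl_subset_compl.mpr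
      (subset_iUnion (fun n => Pi0 ⁻¹' (K n) ∩ 𝒰) n)) (hνC n)
end

section
/- Let C₀(ℝ²;ℝ) denote the Banach space of continuous functions ℝ² → ℝ vanishing at infinity, and endow its continuous dual space with the weak-* topology and the associated Borel σ-algebra. Then the set of continuous linear functionals Λ for which there exists f ∈ L¹(ℝ²) with Λ(g) = ∫_{ℝ²} g f dx for every g ∈ C₀(ℝ²;ℝ) is a Borel subset of the weak-* dual. (Via the Riesz representation identifying finite signed Borel measures ℳ(ℝ²) with C₀(ℝ²)′, this states that L¹(ℝ²) is Borel measurable in ℳ(ℝ²) with the weak-* topology.) -/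
open MeasureTheory ZeroAtInfty

local notation "E" => EuclideanSpace ℝ (Fin 2)

theorem aux_norm_coe_le (g : C₀(E, ℝ)) (x : E) : ‖g x‖ ≤ ‖g‖ :=
  (g.toBCF).norm_coe_le_norm x

theorem aux_norm_le (g : C₀(E, ℝ)) (C : ℝ) (hC : 0 ≤ C) (h : ∀ x, ‖g x‖ ≤ C) : ‖g‖ ≤ C := by
  rw [← ZeroAtInftyContinuousMap.norm_toBCF_eq_norm]
  exact (BoundedContinuousFunction.norm_le hC).2 h

/-- Functions supported in a closed ball. -/
def auxS (n : ℕ) : Set C₀(E, ℝ) := {g | ∀ x, x ∉ Metric.closedBall (0 : E) n → g x = 0}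

theorem auxS_separable (n : ℕ) : TopologicalSpace.IsSeparable (auxS n) := by
  let K : Set E := Metric.closedBall (0 : E) n
  haveI : CompactSpace K := isCompact_iff_compactSpace.1 (isCompact_closedBall _ _)
  let r : auxS n → C(K, ℝ) := fun g => ⟨fun x => g.1 x, (g.1.continuous).comp continuous_subtype_val⟩
  have hr : Isometry r := by
    refine Isometry.of_dist_eq fun a b => ?_
    apply le_antisymm
    · rw [ContinuousMap.dist_le dist_nonneg]
      intro x
      have := aux_norm_coe_le (a.1 - b.1) x
      rw [Subtype.dist_eq, dist_eq_norm, dist_eq_norm]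
      exact this
    · rw [Subtype.dist_eq, dist_eq_norm]
      refine aux_norm_le _ _ dist_nonneg fun x => ?_
      by_cases hx : x ∈ K
      · have := ContinuousMap.dist_apply_le_dist (f := r a) (g := r b) ⟨x, hx⟩
        rw [dist_eq_norm] at this
        exact this
      · have h1 := a.2 x hx
        have h2 := b.2 x hx
        simp [h1, h2]
  haveI : SecondCountableTopology (auxS n) := hr.isEmbedding.secondCountableTopology
  exact TopologicalSpace.IsSeparable.of_subtype _

theorem aux_dense : closure (⋃ n, auxS n) = Set.univ := by
  rw [Set.eq_univ_iff_forall]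
  intro g
  rw [Metric.mem_closure_iff]
  intro ε hε
  let φ : ℝ → ℝ := fun t => t - max (-(ε/2)) (min (ε/2) t)
  have hφ : Continuous φ := by fun_prop
  have hφ0 : ∀ t, |t| ≤ ε/2 → φ t = 0 := by
    intro t ht
    rw [abs_le] at ht
    simp only [φ]
    rw [min_eq_right ht.2, max_eq_right ht.1, sub_self]
  have hφ1 : ∀ t, |t - φ t| ≤ ε/2 := by
    intro t
    simp only [φ, sub_sub_cancel]
    rw [abs_le]
    exact ⟨le_max_left _ _, max_le (by linarith) (min_le_left _ _)⟩
  have hg := g.zero_at_infty'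
  let h : C₀(E, ℝ) := ⟨⟨fun x => φ (g x), hφ.comp g.continuous⟩, by
    have h0 : φ 0 = 0 := hφ0 0 (by simp; positivity)
    have := (hφ.tendsto 0).comp hg
    rw [h0] at this
    exact this⟩
  refine ⟨h, ?_, ?_⟩
  · have h1 : ∀ᶠ x in Filter.cocompact E, |g x| ≤ ε/2 := by
      have := hg.eventually (Metric.closedBall_mem_nhds (0:ℝ) (half_pos hε))
      filter_upwards [this] with x hx
      simpa using hx
    rw [← Metric.cobounded_eq_cocompact,
      (Metric.hasBasis_cobounded_compl_closedBall (0 : E)).eventually_iff] at h1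
    obtain ⟨R, -, hR⟩ := h1
    obtain ⟨n, hn⟩ := exists_nat_ge R
    refine Set.mem_iUnion.2 ⟨n, fun x hx => hφ0 _ (hR ?_)⟩
    exact fun hx' => hx (Metric.closedBall_subset_closedBall hn hx')
  · rw [dist_eq_norm]
    refine lt_of_le_of_lt (aux_norm_le _ (ε/2) (by positivity) fun x => hφ1 (g x)) (by linarith)

theorem aux_sep : TopologicalSpace.SeparableSpace C₀(E, ℝ) := by
  rw [← TopologicalSpace.isSeparable_univ_iff, ← aux_dense]
  exact (TopologicalSpace.IsSeparable.iUnion auxS_separable).closure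

theorem aux_int (g : C₀(E, ℝ)) {f : E → ℝ} (hf : Integrable f) :
    Integrable (fun x => g x * f x) :=
  hf.bdd_mul g.continuous.aestronglyMeasurable (Filter.Eventually.of_forall (aux_norm_coe_le g))

theorem aux_bound (g : C₀(E, ℝ)) (f : E → ℝ) (hf : Integrable f) :
    ‖∫ x, g x * f x‖ ≤ ‖g‖ * ∫ x, ‖f x‖ := by
  rw [← integral_const_mul]
  refine norm_integral_le_of_norm_le (hf.norm.const_mul _) (Filter.Eventually.of_forall fun x => ?_)
  rw [norm_mul]
  exact mul_le_mul_of_nonneg_right (aux_norm_coe_le g x) (norm_nonneg _)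

theorem aux_cont_f (g : C₀(E, ℝ)) :
    Continuous (fun f : Lp ℝ 1 (volume : Measure E) => ∫ x, g x * f x) := by
  refine (LipschitzWith.of_dist_le_mul (K := ‖g‖₊) fun a b => ?_).continuous
  have ha := L1.integrable_coeFn a
  have hb := L1.integrable_coeFn b
  rw [dist_eq_norm, dist_eq_norm, ← integral_sub (aux_int g ha) (aux_int g hb),
    L1.norm_eq_integral_norm]
  have h1 : ∫ x, ‖(a - b : Lp ℝ 1 (volume : Measure E)) x‖ = ∫ x, ‖a x - b x‖ := by
    refine integral_congr_ae ?_
    filter_upwards [Lp.coeFn_sub a b] with x hx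
    rw [hx]; rfl
  rw [h1]
  have := aux_bound g (fun x => a x - b x) (ha.sub hb)
  simp only [mul_sub] at this
  exact this

theorem aux_cont_g (f : E → ℝ) (hf : Integrable f) :
    Continuous (fun g : C₀(E, ℝ) => ∫ x, g x * f x) := by
  refine (LipschitzWith.of_dist_le_mul (K := ⟨∫ x, ‖f x‖, by positivity⟩) fun a b => ?_).continuous
  rw [dist_eq_norm, dist_eq_norm, ← integral_sub (aux_int a hf) (aux_int b hf), mul_comm]
  have := aux_bound (a - b) f hf
  simp only [ZeroAtInftyContinuousMap.sub_apply, sub_mul] at this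
  exact this

/-- `L¹(ℝ²)` is a Borel subset of the weak-* dual of `C₀(ℝ²;ℝ)` (i.e. of the
space of finite signed Borel measures on `ℝ²` with the weak-* topology): the
set of functionals represented by integration against an integrable function
is Borel measurable. -/
theorem L1_measurable_in_weakStar_dual_of_C0 :
    MeasurableSet[borel (WeakDual ℝ C₀(E, ℝ))]
      {Λ : WeakDual ℝ C₀(E, ℝ) |
        ∃ f : E → ℝ, Integrable f (volume : Measure E) ∧
          ∀ g : C₀(E, ℝ), Λ g = ∫ x : E, g x * f x} := by
  haveI := aux_sep
  haveI : Fact ((1 : ENNReal) ≠ ⊤) := ⟨ENNReal.one_ne_top⟩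
  let D : ℕ → C₀(E, ℝ) := TopologicalSpace.denseSeq _
  have hD : DenseRange D := TopologicalSpace.denseRange_denseSeq _
  let F : Lp ℝ 1 (volume : Measure E) → (ℕ → ℝ) := fun f n => ∫ x, D n x * f x
  have hF : Continuous F := continuous_pi fun n => aux_cont_f (D n)
  have hinj : Function.Injective F := by
    intro a b hab
    have ha := L1.integrable_coeFn a
    have hb := L1.integrable_coeFn b
    have key : (fun g : C₀(E, ℝ) => ∫ x, g x * a x) = fun g : C₀(E, ℝ) => ∫ x, g x * b x :=
      hD.equalizer (aux_cont_g _ ha) (aux_cont_g _ hb) hab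
    apply Lp.ext
    refine ae_eq_of_integral_contDiff_smul_eq ha.locallyIntegrable hb.locallyIntegrable ?_
    intro g hg hgs
    exact congrFun key ⟨⟨g, hg.continuous⟩, hgs.is_zero_at_infty⟩
  letI : MeasurableSpace (Lp ℝ 1 (volume : Measure E)) := borel _
  haveI : BorelSpace (Lp ℝ 1 (volume : Measure E)) := ⟨rfl⟩
  have hmeas : MeasurableSet (Set.range F) := (hF.measurableEmbedding hinj).measurableSet_range
  letI : MeasurableSpace (WeakDual ℝ C₀(E, ℝ)) := borel _
  haveI : BorelSpace (WeakDual ℝ C₀(E, ℝ)) := ⟨rfl⟩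
  let Φ : WeakDual ℝ C₀(E, ℝ) → (ℕ → ℝ) := fun Λ n => Λ (D n)
  have hΦ : Continuous Φ := continuous_pi fun n => WeakDual.eval_continuous (D n)
  have hpre : MeasurableSet (Φ ⁻¹' Set.range F) := hΦ.measurable hmeas
  convert hpre using 1
  ext Λ
  simp only [Set.mem_setOf_eq, Set.mem_preimage, Set.mem_range]
  constructor
  · rintro ⟨f, hf, h⟩
    refine ⟨hf.toL1 f, ?_⟩
    funext n
    simp only [F, Φ]
    rw [h]
    refine integral_congr_ae ?_
    filter_upwards [hf.coeFn_toL1] with x hx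
    rw [hx]
  · rintro ⟨f, h⟩
    refine ⟨f, L1.integrable_coeFn f, fun g => ?_⟩
    have := hD.equalizer (map_continuous (WeakDual.toStrongDual Λ)) (aux_cont_g _ (L1.integrable_coeFn f)) h.symm
    exact congrFun this g
end

section
/- Fix k ∈ ℕ. The set of all u ∈ L²(ℝ²;ℝ²) for which there exists a finite nonnegative Borel measure μ on ℝ² with support contained in the closed ball of radius k centred at 0 such that ∫_{ℝ²} φ dμ = ∫_{ℝ²} (u¹ ∂₂φ − u² ∂₁φ) dx for every φ ∈ C_c^∞(ℝ²) is closed in L²(ℝ²;ℝ²). Consequently, the set of all u ∈ L²(ℝ²;ℝ²) whose distributional vorticity is a compactly supported finite nonnegative Borel measure is a Borel subset of L²(ℝ²;ℝ²). -/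
open MeasureTheory

local notation "E" => EuclideanSpace ℝ (Fin 2)

/-- The finite nonnegative Borel measure `μ` represents the distributional
vorticity (curl) of the square-integrable vector field `u` on `ℝ²`:
`∫ φ dμ = ∫ (u¹ ∂₂φ - u² ∂₁φ) dx` for all `φ ∈ C_c^∞(ℝ²)`. -/
def IsMeasureVorticity (u : Lp E 2 (volume : Measure E)) (μ : Measure E) : Prop :=
  ∀ φ : E → ℝ, ContDiff ℝ (⊤ : ℕ∞) φ → HasCompactSupport φ →
    ∫ x : E, φ x ∂μ =
      ∫ x : E, (u x 0 * fderiv ℝ φ x (EuclideanSpace.single 1 1) -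
        u x 1 * fderiv ℝ φ x (EuclideanSpace.single 0 1))

theorem continuous_vortFunctional (φ : E → ℝ) (hφ : ContDiff ℝ (⊤ : ℕ∞) φ)
    (hc : HasCompactSupport φ) :
    Continuous (fun u : Lp E 2 (volume : Measure E) =>
      ∫ x : E, (u x 0 * fderiv ℝ φ x (EuclideanSpace.single 1 1) -
        u x 1 * fderiv ℝ φ x (EuclideanSpace.single 0 1))) := by
  have hd : Continuous (fderiv ℝ φ) := hφ.continuous_fderiv (by simp)
  have hdc : HasCompactSupport (fderiv ℝ φ) := hc.fderiv ℝ
  let w : E → E := fun x =>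
    fderiv ℝ φ x (EuclideanSpace.single 1 1) • EuclideanSpace.single 0 1 -
      fderiv ℝ φ x (EuclideanSpace.single 0 1) • EuclideanSpace.single 1 1
  have hw : Continuous w := by
    fun_prop
  have hwc : HasCompactSupport w := by
    refine hdc.mono' ?_
    refine (fun x hx => subset_tsupport _ ?_)
    intro h0
    apply hx
    simp [w, h0]
  have hm : MemLp w 2 (volume : Measure E) := hw.memLp_of_hasCompactSupport hwc
  have key : ∀ u : Lp E 2 (volume : Measure E),
      ∫ x : E, (u x 0 * fderiv ℝ φ x (EuclideanSpace.single 1 1) -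
        u x 1 * fderiv ℝ φ x (EuclideanSpace.single 0 1)) = inner ℝ u (hm.toLp w) := by
    intro u
    rw [L2.inner_def]
    apply integral_congr_ae
    filter_upwards [hm.coeFn_toLp] with x hx
    rw [hx]
    simp [w, PiLp.inner_apply, Fin.sum_univ_two]
    ring
  simp_rw [key]
  fun_prop

open Filter Topology in
theorem isClosed_vortClass (k : ℕ) :
    IsClosed {u : Lp E 2 (volume : Measure E) |
      ∃ μ : Measure E, IsFiniteMeasure μ ∧
        μ (Metric.closedBall (0 : E) k)ᶜ = 0 ∧ IsMeasureVorticity u μ} := by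
  rw [isClosed_iff_ultrafilter]
  intro u f hfu hS
  obtain ⟨χ, hχ1, hχs, hχ⟩ : ∃ χ : E → ℝ, (∀ x ∈ Metric.closedBall (0 : E) k, χ x = 1) ∧
      HasCompactSupport χ ∧ ContDiff ℝ (⊤ : ℕ∞) χ := by
    let b : ContDiffBump (0 : E) := ⟨k + 1, k + 2, by positivity, by linarith⟩
    refine ⟨b, fun x hx => b.one_of_mem_closedBall ?_, b.hasCompactSupport, b.contDiff⟩
    exact Metric.closedBall_subset_closedBall (by simp [b]) hx
  let L : (E → ℝ) → Lp E 2 (volume : Measure E) → ℝ := fun φ u =>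
    ∫ x : E, (u x 0 * fderiv ℝ φ x (EuclideanSpace.single 1 1) -
        u x 1 * fderiv ℝ φ x (EuclideanSpace.single 0 1))
  have hL : ∀ φ, ContDiff ℝ (⊤ : ℕ∞) φ → HasCompactSupport φ →
      Tendsto (L φ) f (𝓝 (L φ u)) := fun φ h1 h2 =>
    ((continuous_vortFunctional φ h1 h2).tendsto u).mono_left hfu
  have hex : ∀ v : Lp E 2 (volume : Measure E), ∃ μ : FiniteMeasure E,
      (v ∈ {u : Lp E 2 (volume : Measure E) | ∃ μ : Measure E, IsFiniteMeasure μ ∧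
        μ (Metric.closedBall (0 : E) k)ᶜ = 0 ∧ IsMeasureVorticity u μ}) →
      (μ : Measure E) (Metric.closedBall (0 : E) k)ᶜ = 0 ∧ IsMeasureVorticity v μ := by
    intro v
    by_cases hv : v ∈ {u : Lp E 2 (volume : Measure E) | ∃ μ : Measure E, IsFiniteMeasure μ ∧
        μ (Metric.closedBall (0 : E) k)ᶜ = 0 ∧ IsMeasureVorticity u μ}
    · obtain ⟨μ, h1, h2, h3⟩ := hv
      exact ⟨⟨μ, h1⟩, fun _ => ⟨h2, h3⟩⟩
    · exact ⟨0, fun h => absurd h hv⟩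
  choose m hm using hex
  let C : NNReal := (L χ u + 1).toNNReal
  have hev : ∀ᶠ v in (f : Filter _), L χ v < L χ u + 1 :=
    (hL χ hχ hχs).eventually_lt_const (by linarith)
  have hcpt := isCompact_setOfPred_finiteMeasure_le_of_isCompact C
    (isCompact_closedBall (0 : E) (k : ℝ))
  have hmem : ∀ᶠ v in (f : Filter _), m v ∈ {μ : FiniteMeasure E |
      μ.mass ≤ C ∧ μ (Metric.closedBall (0 : E) k)ᶜ = 0} := by
    filter_upwards [hev, hS] with v hv1 hv2
    obtain ⟨h1, h2⟩ := hm v hv2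
    refine ⟨?_, (FiniteMeasure.null_iff_toMeasure_null _ _).2 h1⟩
    have h3 : ∫ x, χ x ∂(m v : Measure E) = L χ v := h2 χ hχ hχs
    have h4 : ∫ x, χ x ∂(m v : Measure E) = ((m v).mass : ℝ) := by
      have : χ =ᵐ[(m v : Measure E)] fun _ => (1 : ℝ) := by
        have : ∀ᵐ x ∂(m v : Measure E), x ∈ Metric.closedBall (0 : E) k := h1
        filter_upwards [this] with x hx using hχ1 x hx
      rw [integral_congr_ae this]
      rw [integral_const, smul_eq_mul, mul_one]
      rfl
    have h5 : ((m v).mass : ℝ) ≤ L χ u + 1 := by linarith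
    exact NNReal.le_toNNReal_of_coe_le h5
  obtain ⟨μ, hμ, hlim⟩ := hcpt.ultrafilter_le_nhds' (f.map m) hmem
  have hlim' : Tendsto m f (𝓝 μ) := hlim
  refine ⟨μ, inferInstance, ?_, ?_⟩
  · exact (FiniteMeasure.null_iff_toMeasure_null _ _).1 hμ.2
  · intro φ h1 h2
    have ht := (FiniteMeasure.tendsto_iff_forall_integral_tendsto.1 hlim')
      (BoundedContinuousFunction.ofNormedAddCommGroup φ h1.continuous
        (h2.exists_bound_of_continuous h1.continuous).choose
        (h2.exists_bound_of_continuous h1.continuous).choose_spec)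
    simp only [BoundedContinuousFunction.coe_ofNormedAddCommGroup] at ht
    refine tendsto_nhds_unique ht ((hL φ h1 h2).congr' ?_)
    filter_upwards [hS] with v hv
    exact ((hm v hv).2 φ h1 h2).symm

/-- The set of square-integrable vector fields on `ℝ²` whose distributional
vorticity is a finite nonnegative Borel measure supported in the closed ball of
radius `k` is closed in `L²`; consequently the vortex-sheet class of vector
fields, whose vorticity is a compactly supported finite nonnegative Borel
measure, is a Borel subset of `L²`. -/
theorem vortex_sheet_class_closed_and_borel (k : ℕ) :
    IsClosed {u : Lp E 2 (volume : Measure E) |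
      ∃ μ : Measure E, IsFiniteMeasure μ ∧
        μ (Metric.closedBall (0 : E) k)ᶜ = 0 ∧ IsMeasureVorticity u μ} ∧
    MeasurableSet[borel (Lp E 2 (volume : Measure E))]
      {u : Lp E 2 (volume : Measure E) |
        ∃ μ : Measure E, IsFiniteMeasure μ ∧
          (∃ m : ℕ, μ (Metric.closedBall (0 : E) m)ᶜ = 0) ∧
          IsMeasureVorticity u μ} := by
  refine ⟨isClosed_vortClass k, ?_⟩
  have : {u : Lp E 2 (volume : Measure E) |
        ∃ μ : Measure E, IsFiniteMeasure μ ∧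
          (∃ m : ℕ, μ (Metric.closedBall (0 : E) m)ᶜ = 0) ∧
          IsMeasureVorticity u μ} = ⋃ m : ℕ, {u : Lp E 2 (volume : Measure E) |
      ∃ μ : Measure E, IsFiniteMeasure μ ∧
        μ (Metric.closedBall (0 : E) m)ᶜ = 0 ∧ IsMeasureVorticity u μ} := by
    ext u
    simp only [Set.mem_ofPred_eq, Set.mem_iUnion]
    constructor
    · rintro ⟨μ, h1, ⟨m, h2⟩, h3⟩
      exact ⟨m, μ, h1, h2, h3⟩
    · rintro ⟨m, μ, h1, h2, h3⟩
      exact ⟨μ, h1, ⟨m, h2⟩, h3⟩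
  rw [this]
  letI : MeasurableSpace (Lp E 2 (volume : Measure E)) := borel _
  haveI : BorelSpace (Lp E 2 (volume : Measure E)) := ⟨rfl⟩
  exact MeasurableSet.iUnion fun m => (isClosed_vortClass m).measurableSet
end

section
/- Let g : ℝ → ℝ be smooth with compact support, and define σ : ℝ² → ℝ² by σ(x) = (‖x‖⁻²)(−x₂, x₁) ∫₀^{‖x‖} s g(s) ds for x ≠ 0 and σ(0) = 0. Then σ is smooth on ℝ² \ {0}, and for every x ≠ 0: (i) div σ(x) = ∂₁σ¹(x) + ∂₂σ²(x) = 0; (ii) the vorticity satisfies ∂₁σ²(x) − ∂₂σ¹(x) = g(‖x‖); (iii) ‖σ(x)‖ ≤ (∫₀^∞ s |g(s)| ds) / ‖x‖. -/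
open MeasureTheory intervalIntegral

local notation "E" => EuclideanSpace ℝ (Fin 2)

lemma aux_G (g : ℝ → ℝ) (hg : ContDiff ℝ (⊤ : ℕ∞) g) (r : ℝ) :
    HasDerivAt (fun r : ℝ => ∫ s in (0 : ℝ)..r, s * g s) (r * g r) r := by
  have hc : Continuous (fun s : ℝ => s * g s) := continuous_id.mul hg.continuous
  exact intervalIntegral.integral_hasDerivAt_right (hc.intervalIntegrable _ _)
    (hc.stronglyMeasurableAtFilter _ _) hc.continuousAt

lemma aux_Gs (g : ℝ → ℝ) (hg : ContDiff ℝ (⊤ : ℕ∞) g) :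
    ContDiff ℝ (⊤ : ℕ∞) (fun r : ℝ => ∫ s in (0 : ℝ)..r, s * g s) := by
  rw [contDiff_infty_iff_deriv]
  refine ⟨fun r => (aux_G g hg r).differentiableAt, ?_⟩
  have : deriv (fun r : ℝ => ∫ s in (0 : ℝ)..r, s * g s) = fun r => r * g r :=
    funext fun r => (aux_G g hg r).deriv
  rw [this]
  exact contDiff_id.mul hg

lemma aux_norm (x v : E) (hx : x ≠ 0) :
    ‖x‖ * fderiv ℝ (fun y : E => ‖y‖) x v = x 0 * v 0 + x 1 * v 1 := by
  have hd : DifferentiableAt ℝ (fun y : E => ‖y‖) x :=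
    (contDiffAt_norm ℝ hx (n := 1)).differentiableAt (by norm_num)
  have h1 := hd.hasFDerivAt.pow 2
  have h2 := (hasStrictFDerivAt_norm_sq x).hasFDerivAt
  have h3 := congrArg (fun L => L v) (h1.unique h2)
  simp [PiLp.inner_apply, Fin.sum_univ_two] at h3
  linarith

lemma aux_F (F : ℝ → ℝ) (F' : ℝ) (x : E) (hx : x ≠ 0) (hF : HasDerivAt F F' ‖x‖) (i : Fin 2)
    (v : E) : DifferentiableAt ℝ (fun y : E => F ‖y‖ * y i) x ∧
    ‖x‖ * fderiv ℝ (fun y : E => F ‖y‖ * y i) x v =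
      ‖x‖ * F ‖x‖ * v i + F' * (x 0 * v 0 + x 1 * v 1) * x i := by
  have hd : DifferentiableAt ℝ (fun y : E => ‖y‖) x :=
    (contDiffAt_norm ℝ hx (n := 1)).differentiableAt (by norm_num)
  have h1 := hF.comp_hasFDerivAt x hd.hasFDerivAt
  have h2 : HasFDerivAt (fun y : E => y i) (EuclideanSpace.proj i : E →L[ℝ] ℝ) x :=
    (EuclideanSpace.proj i : E →L[ℝ] ℝ).hasFDerivAt
  have h3 := h1.mul h2
  have h4 : HasFDerivAt (fun y : E => F ‖y‖ * y i) _ x := h3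
  refine ⟨h4.differentiableAt, ?_⟩
  rw [h4.fderiv, ← aux_norm x v hx]
  simp
  ring

/-- Basic properties of the stationary vector field
`σ(x) = (x^⊥/‖x‖²) ∫₀^{‖x‖} s g(s) ds` associated with a smooth compactly
supported radial vorticity profile `g`: it is smooth away from the origin,
divergence-free, has vorticity `g(‖x‖)`, and decays like `1/‖x‖`. -/
theorem stationary_vector_field_properties
    (g : ℝ → ℝ) (hg_smooth : ContDiff ℝ (⊤ : ℕ∞) g) (hg_supp : HasCompactSupport g)
    (σ : E → E)
    (hσ : ∀ x : E,
      σ x = ((‖x‖ ^ 2)⁻¹ * ∫ s in (0 : ℝ)..‖x‖, s * g s) •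
        (EuclideanSpace.equiv (Fin 2) ℝ).symm ![-(x 1), x 0])
    (hσ0 : σ 0 = 0) :
    ContDiffOn ℝ (⊤ : ℕ∞) σ {(0 : E)}ᶜ ∧
    (∀ x : E, x ≠ 0 →
      fderiv ℝ (fun y => σ y 0) x (EuclideanSpace.single 0 1) +
        fderiv ℝ (fun y => σ y 1) x (EuclideanSpace.single 1 1) = 0) ∧
    (∀ x : E, x ≠ 0 →
      fderiv ℝ (fun y => σ y 1) x (EuclideanSpace.single 0 1) -
        fderiv ℝ (fun y => σ y 0) x (EuclideanSpace.single 1 1) = g ‖x‖) ∧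
    (∀ x : E, x ≠ 0 →
      ‖σ x‖ ≤ (∫ s in Set.Ioi (0 : ℝ), s * |g s|) / ‖x‖) := by
  have hx0 : ∀ x : E, x ≠ 0 → 0 < ‖x‖ := fun x hx => norm_pos_iff.2 hx
  set F : ℝ → ℝ := fun r => (r ^ 2)⁻¹ * ∫ s in (0 : ℝ)..r, s * g s with hFdef
  have hF : ∀ r : ℝ, 0 < r → ∃ F', HasDerivAt F F' r ∧ r * F' = g r - 2 * F r := by
    intro r hr
    have h1 : HasDerivAt (fun r : ℝ => (r ^ 2)⁻¹) _ r :=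
      (hasDerivAt_pow 2 r).inv (by positivity)
    refine ⟨_, h1.mul (aux_G g hg_smooth r), ?_⟩
    simp only [hFdef]
    field_simp
    simp
    ring
  have hs0 : (fun y => σ y 0) = fun y : E => -(F ‖y‖ * y 1) := by
    funext y
    rw [hσ y]
    simp [hFdef]
  have hs1 : (fun y => σ y 1) = fun y : E => F ‖y‖ * y 0 := by
    funext y
    rw [hσ y]
    simp [hFdef]
  have hsq : ∀ x : E, ‖x‖ ^ 2 = x 0 ^ 2 + x 1 ^ 2 := by
    intro x
    simp [EuclideanSpace.norm_sq_eq, Fin.sum_univ_two]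
  refine ⟨?_, ?_, ?_, ?_⟩
  · intro x hx
    have hx : x ≠ 0 := hx
    apply ContDiffAt.contDiffWithinAt
    have hn : ContDiffAt ℝ (⊤ : ℕ∞) (fun y : E => ‖y‖) x := contDiffAt_norm ℝ hx
    have hG : ContDiffAt ℝ (⊤ : ℕ∞) (fun y : E => F ‖y‖) x := by
      refine ContDiffAt.mul (ContDiffAt.inv (hn.pow 2) (pow_ne_zero _ (hx0 x hx).ne')) ?_
      exact (aux_Gs g hg_smooth).contDiffAt.comp x hn
    have hp : ∀ i : Fin 2, ContDiffAt ℝ (⊤ : ℕ∞) (fun y : E => y i) x := fun i =>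
      (EuclideanSpace.proj i : E →L[ℝ] ℝ).contDiff.contDiffAt
    rw [contDiffAt_euclidean]
    intro i
    fin_cases i
    · change ContDiffAt ℝ _ (fun y => σ y 0) x
      rw [hs0]
      exact (hG.mul (hp 1)).neg
    · change ContDiffAt ℝ _ (fun y => σ y 1) x
      rw [hs1]
      exact hG.mul (hp 0)
  · intro x hx
    obtain ⟨F', hF', -⟩ := hF _ (hx0 x hx)
    rw [hs0, hs1, fderiv_fun_neg]
    have a := (aux_F F F' x hx hF' 1 (EuclideanSpace.single 0 1)).2
    have b := (aux_F F F' x hx hF' 0 (EuclideanSpace.single 1 1)).2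
    apply mul_left_cancel₀ (hx0 x hx).ne'
    simp at a b
    simp only [neg_apply, ContinuousLinearMap.neg_apply]
    linear_combination b - a
  · intro x hx
    obtain ⟨F', hF', hE⟩ := hF _ (hx0 x hx)
    rw [hs0, hs1, fderiv_fun_neg]
    have a := (aux_F F F' x hx hF' 1 (EuclideanSpace.single 1 1)).2
    have b := (aux_F F F' x hx hF' 0 (EuclideanSpace.single 0 1)).2
    apply mul_left_cancel₀ (hx0 x hx).ne'
    simp at a b
    simp only [neg_apply, ContinuousLinearMap.neg_apply]
    linear_combination b + a + ‖x‖ * hE - F' * hsq x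
  · intro x hx
    have hr := hx0 x hx
    have hc : Continuous (fun s : ℝ => s * |g s|) := continuous_id.mul hg_smooth.continuous.abs
    have hcs : HasCompactSupport (fun s : ℝ => s * |g s|) :=
      HasCompactSupport.mul_left (f := fun s : ℝ => s) (hg_supp.comp_left (g := fun t => |t|) abs_zero)
    have hint : Integrable (fun s : ℝ => s * |g s|) := hc.integrable_of_hasCompactSupport hcs
    have hI : |∫ s in (0 : ℝ)..‖x‖, s * g s| ≤ ∫ s in Set.Ioi (0 : ℝ), s * |g s| := by
      calc |∫ s in (0 : ℝ)..‖x‖, s * g s| ≤ ∫ s in (0 : ℝ)..‖x‖, |s * g s| :=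
            intervalIntegral.abs_integral_le_integral_abs hr.le
        _ = ∫ s in Set.Ioc (0 : ℝ) ‖x‖, s * |g s| := by
            rw [intervalIntegral.integral_of_le hr.le]
            refine setIntegral_congr_fun measurableSet_Ioc fun s hs => ?_
            simp only [abs_mul, abs_of_pos hs.1]
        _ ≤ _ := by
            refine setIntegral_mono_set hint.integrableOn ?_ ?_
            · filter_upwards [ae_restrict_mem measurableSet_Ioi] with s hs
              exact mul_nonneg (le_of_lt hs) (abs_nonneg _)
            · exact Set.Ioc_subset_Ioi_self.eventuallyLE
    have hn : ‖(EuclideanSpace.equiv (Fin 2) ℝ).symm ![-(x 1), x 0]‖ = ‖x‖ := by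
      rw [← sq_eq_sq₀ (norm_nonneg _) (norm_nonneg _), hsq x, EuclideanSpace.norm_sq_eq]
      simp [Fin.sum_univ_two]
      ring
    rw [hσ x, norm_smul, hn, Real.norm_eq_abs, abs_mul, abs_of_pos (by positivity), le_div_iff₀ hr]
    refine le_trans (le_of_eq ?_) hI
    field_simp
end
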